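/- arXiv:1912.10149 — 6 statements merged into one kernel-verified Lean document; each statement's English description precedes it below -/
import Mathlib

section
/- Let A be any nonempty proper subset of the set of all states. Then: (i) there exists at least one admissible transition (S,T) with S ∈ A and T ∉ A, and at least one admissible transition (T,S) with T ∉ A and S ∈ A; and (ii) the function φ satisfies the modified balance equation across A, namely max{ φ(S) − r(S,T) : (S,T) admissible, S ∈ A, T ∉ A } = max{ φ(T) − r(T,S) : (T,S) admissible, T ∉ A, S ∈ A }. -/
/-- The potential function φ(S) = G(S) - Σ_{b∈S} γ_b. -/
noncomputable def phi {B : ℕ} (G : Finset (Fin B) → ℝ) (γ : Fin B → ℝ)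
    (S : Finset (Fin B)) : ℝ :=
  G S - ∑ b ∈ S, γ b

/-- An ordered pair (S,T) of states is an admissible transition if it is upward
(S ⊊ T) or downward (T = S \ {b₀} for some b₀ ∈ S). -/
def Adm {B : ℕ} (S T : Finset (Fin B)) : Prop :=
  S ⊂ T ∨ ∃ b₀ ∈ S, T = S.erase b₀

/-- Resistance of an admissible transition: Σ_{b∈T∖S} γ_b for an upward transition,
G(S) - G(T) for a downward one. -/
noncomputable def res {B : ℕ} (G : Finset (Fin B) → ℝ) (γ : Fin B → ℝ)
    (S T : Finset (Fin B)) : ℝ :=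
  if S ⊂ T then ∑ b ∈ T \ S, γ b else G S - G T

theorem cross_step {B : ℕ} (A : Set (Finset (Fin B))) (S : Finset (Fin B)) (hS : S ∈ A)
    (T : Finset (Fin B)) (hST : S ⊆ T) (hT : T ∉ A) :
    ∃ V, ∃ b ∈ V, V ∉ A ∧ V.erase b ∈ A ∧ S ⊆ V.erase b ∧ V ⊆ T := by
  induction T using Finset.strongInduction with
  | H T ih =>
    have hne : S ≠ T := fun h => hT (h ▸ hS)
    obtain ⟨b, hbT, hbS⟩ := Finset.exists_of_ssubset (hST.ssubset_of_ne hne)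
    have hsub : S ⊆ T.erase b := Finset.subset_erase.2 ⟨hST, hbS⟩
    by_cases h : T.erase b ∈ A
    · exact ⟨T, b, hbT, hT, h, hsub, subset_rfl⟩
    · obtain ⟨V, c, hc, h1, h2, h3, h4⟩ := ih _ (Finset.erase_ssubset hbT) hsub h
      exact ⟨V, c, hc, h1, h2, h3, h4.trans (Finset.erase_subset _ _)⟩

theorem val_up {B : ℕ} (G : Finset (Fin B) → ℝ) (γ : Fin B → ℝ) (S T : Finset (Fin B))
    (h : S ⊂ T) : phi G γ S - res G γ S T = G S - ∑ b ∈ T, γ b := by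
  have := Finset.sum_sdiff (f := γ) h.subset
  simp only [phi, res, if_pos h]
  linarith

theorem val_down {B : ℕ} (G : Finset (Fin B) → ℝ) (γ : Fin B → ℝ) (S T : Finset (Fin B))
    (h : T ⊂ S) : phi G γ S - res G γ S T = G T - ∑ b ∈ S, γ b := by
  have h' : ¬ S ⊂ T := fun h2 => h2.2 h.1
  simp only [phi, res, if_neg h']
  linarith

theorem key_step {B : ℕ} (G : Finset (Fin B) → ℝ) (γ : Fin B → ℝ)
    (hGmono : ∀ S T : Finset (Fin B), S ⊆ T → G S ≤ G T)
    (hγ : ∀ b, 0 < γ b) (A : Set (Finset (Fin B))) (S T : Finset (Fin B))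
    (hS : S ∈ A) (hT : T ∉ A) (h : Adm S T) :
    ∃ T' ∉ A, ∃ S' ∈ A, Adm T' S' ∧
      phi G γ S - res G γ S T ≤ phi G γ T' - res G γ T' S' := by
  rcases h with h | ⟨b, hb, rfl⟩
  · obtain ⟨V, b, hb, h1, h2, h3, h4⟩ := cross_step A S hS T h.subset hT
    refine ⟨V, h1, _, h2, Or.inr ⟨b, hb, rfl⟩, ?_⟩
    rw [val_up _ _ _ _ h, val_down _ _ _ _ (Finset.erase_ssubset hb)]
    have e1 := hGmono _ _ h3
    have e2 : ∑ b ∈ V, γ b ≤ ∑ b ∈ T, γ b :=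
      Finset.sum_le_sum_of_subset_of_nonneg h4 (fun i _ _ => (hγ i).le)
    linarith
  · have hs := Finset.erase_ssubset hb
    exact ⟨_, hT, S, hS, Or.inl hs, by rw [val_up _ _ _ _ hs, val_down _ _ _ _ hs]⟩

theorem fin_vals {B : ℕ} (P : Finset (Fin B) → Finset (Fin B) → Prop)
    (f : Finset (Fin B) → Finset (Fin B) → ℝ) (X : Set ℝ)
    (hX : ∀ x ∈ X, ∃ S T, P S T ∧ x = f S T) : BddAbove X := by
  refine ((Set.finite_range (fun p : Finset (Fin B) × Finset (Fin B) => f p.1 p.2)).subset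
    ?_).bddAbove
  intro x hx
  obtain ⟨S, T, _, rfl⟩ := hX x hx
  exact ⟨(S, T), rfl⟩

/-- Lemma 5 ("our_balance"): for every nonempty proper set of states A, the crossing
transitions in both directions exist, and φ satisfies the modified balance equation
across A. -/
theorem stmt0 {B : ℕ} (G : Finset (Fin B) → ℝ) (γ : Fin B → ℝ)
    (hG0 : G ∅ = 0)
    (hGmono : ∀ S T : Finset (Fin B), S ⊆ T → G S ≤ G T)
    (hγ : ∀ b, 0 < γ b)
    (A : Set (Finset (Fin B))) (hA : A.Nonempty) (hA' : A ≠ Set.univ) :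
    (∃ S ∈ A, ∃ T ∉ A, Adm S T) ∧
    (∃ T ∉ A, ∃ S ∈ A, Adm T S) ∧
    sSup {x : ℝ | ∃ S ∈ A, ∃ T ∉ A, Adm S T ∧ x = phi G γ S - res G γ S T} =
      sSup {x : ℝ | ∃ T ∉ A, ∃ S ∈ A, Adm T S ∧ x = phi G γ T - res G γ T S} := by
  have k1 := key_step G γ hGmono hγ A
  have k2 : ∀ T S, T ∉ A → S ∈ A → Adm T S → ∃ S' ∈ A, ∃ T' ∉ A, Adm S' T' ∧
      phi G γ T - res G γ T S ≤ phi G γ S' - res G γ S' T' := by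
    intro T S hT hS h
    obtain ⟨S', h1, T', h2, h3⟩ := key_step G γ hGmono hγ Aᶜ T S hT (fun h => h hS) h
    exact ⟨S', not_not.1 h1, T', h2, h3⟩
  have hex : (∃ S ∈ A, ∃ T ∉ A, Adm S T) ∧ (∃ T ∉ A, ∃ S ∈ A, Adm T S) := by
    obtain ⟨S, hS⟩ := hA
    obtain ⟨T, hT⟩ := (Set.ne_univ_iff_exists_notMem A).1 hA'
    by_cases hu : (Finset.univ : Finset (Fin B)) ∈ A
    · have ha : Adm T Finset.univ :=
        Or.inl ((Finset.subset_univ T).ssubset_of_ne (fun h => hT (h ▸ hu)))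
      obtain ⟨S', h1, T', h2, h3, _⟩ := k2 _ _ hT hu ha
      exact ⟨⟨S', h1, T', h2, h3⟩, T, hT, _, hu, ha⟩
    · have ha : Adm S Finset.univ :=
        Or.inl ((Finset.subset_univ S).ssubset_of_ne (fun h => hu (h ▸ hS)))
      obtain ⟨T', h1, S', h2, h3, _⟩ := k1 _ _ hS hu ha
      exact ⟨⟨S, hS, _, hu, ha⟩, T', h1, S', h2, h3⟩
  refine ⟨hex.1, hex.2, ?_⟩
  obtain ⟨⟨S, hS, T, hT, h⟩, ⟨T2, hT2, S2, hS2, h2⟩⟩ := hex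
  apply le_antisymm
  · refine csSup_le ⟨_, S, hS, T, hT, h, rfl⟩ ?_
    rintro x ⟨S, hS, T, hT, h, rfl⟩
    obtain ⟨T', h1, S', h2, h3, h4⟩ := k1 S T hS hT h
    refine h4.trans (le_csSup ?_ ⟨T', h1, S', h2, h3, rfl⟩)
    refine fin_vals (fun _ _ => True) (fun S T => phi G γ S - res G γ S T) _ ?_
    rintro x ⟨T, _, S, _, _, rfl⟩
    exact ⟨T, S, trivial, rfl⟩
  · refine csSup_le ⟨_, T2, hT2, S2, hS2, h2, rfl⟩ ?_
    rintro x ⟨T, hT, S, hS, h, rfl⟩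
    obtain ⟨S', h1, T', h2, h3, h4⟩ := k2 T S hT hS h
    refine h4.trans (le_csSup ?_ ⟨S', h1, T', h2, h3, rfl⟩)
    refine fin_vals (fun _ _ => True) (fun S T => phi G γ S - res G γ S T) _ ?_
    rintro x ⟨T, _, S, _, _, rfl⟩
    exact ⟨T, S, trivial, rfl⟩
end

section
/- Let A be any nonempty proper subset of the set of all states. Then the maximum of φ(S) − r(S,T) over all admissible transitions (S,T) with S ∈ A and T ∉ A is equal to the maximum of φ(S) − r(S,T) over the subcollection of such admissible transitions for which additionally ||T| − |S|| = 1 (i.e., T is a parent or a child of S); moreover this subcollection is nonempty. -/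
theorem cross_aux {B : ℕ} (A : Set (Finset (Fin B))) (n : ℕ) :
    ∀ S T : Finset (Fin B), S ⊆ T → (T \ S).card = n → S ∈ A → T ∉ A →
      ∃ S' T', S ⊆ S' ∧ T' ⊆ T ∧ S' ∈ A ∧ T' ∉ A ∧ ∃ b ∉ S', T' = insert b S' := by
  induction n with
  | zero =>
    intro S T h hc hS hT
    have : T ⊆ S := by simpa using hc
    exact absurd (h.antisymm this ▸ hS) hT
  | succ n ih =>
    intro S T h hc hS hT
    obtain ⟨b, hb⟩ : (T \ S).Nonempty := by
      rw [← Finset.card_pos]; omega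
    obtain ⟨hbT, hbS⟩ := Finset.mem_sdiff.1 hb
    have hsub : insert b S ⊆ T := Finset.insert_subset hbT h
    by_cases hi : insert b S ∈ A
    · have hcc : (T \ insert b S).card = n := by
        have : T \ insert b S = (T \ S).erase b := by
          ext x; simp; tauto
        rw [this, Finset.card_erase_of_mem hb]; omega
      obtain ⟨S', T', h1, h2⟩ := ih (insert b S) T hsub hcc hi hT
      exact ⟨S', T', (Finset.subset_insert b S).trans h1, h2⟩
    · exact ⟨S, insert b S, subset_rfl, hsub, hS, hi, b, hbS, rfl⟩

/-- Reduction of the modified balance system (10) to system (17): for every nonempty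
proper set A of states, the max of φ(S) - r(S,T) over admissible crossing pairs equals
the max over the (nonempty) subcollection of crossing pairs that are parent–child pairs. -/
theorem stmt1 {B : ℕ} (G : Finset (Fin B) → ℝ) (γ : Fin B → ℝ)
    (hG0 : G ∅ = 0)
    (hGmono : ∀ S T : Finset (Fin B), S ⊆ T → G S ≤ G T)
    (hγ : ∀ b, 0 < γ b)
    (A : Set (Finset (Fin B))) (hA : A.Nonempty) (hA' : A ≠ Set.univ) :
    (∃ S ∈ A, ∃ T ∉ A, Adm S T ∧ (T.card = S.card + 1 ∨ S.card = T.card + 1)) ∧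
    sSup {x : ℝ | ∃ S ∈ A, ∃ T ∉ A, Adm S T ∧ x = phi G γ S - res G γ S T} =
      sSup {x : ℝ | ∃ S ∈ A, ∃ T ∉ A, Adm S T ∧
        (T.card = S.card + 1 ∨ S.card = T.card + 1) ∧ x = phi G γ S - res G γ S T} := by
  constructor
  · obtain ⟨S, hS⟩ := hA
    obtain ⟨T, hT⟩ := (Set.ne_univ_iff_exists_notMem A).1 hA'
    by_cases hU : S ∪ T ∈ A
    · obtain ⟨S', T', -, -, h1, h2, b, hb, rfl⟩ :=
        cross_aux Aᶜ _ T (S ∪ T) Finset.subset_union_right rfl hT (by simpa using hU)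
      refine ⟨insert b S', by simpa using h2, S', h1,
        Or.inr ⟨b, Finset.mem_insert_self _ _, (Finset.erase_insert hb).symm⟩,
        Or.inr (Finset.card_insert_of_notMem hb)⟩
    · obtain ⟨S', T', -, -, h1, h2, b, hb, rfl⟩ :=
        cross_aux A _ S (S ∪ T) Finset.subset_union_left rfl hS hU
      exact ⟨S', h1, _, h2, Or.inl (Finset.ssubset_insert hb),
        Or.inl (Finset.card_insert_of_notMem hb)⟩
  · apply csSup_eq_csSup_of_forall_exists_le
    · rintro x ⟨S, hS, T, hT, hadm, rfl⟩
      rcases hadm with h | ⟨b, hb, rfl⟩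
      · obtain ⟨S', T', hSS, hTT, h1, h2, b, hb, rfl⟩ :=
          cross_aux A _ S T h.subset rfl hS hT
        refine ⟨_, ⟨S', h1, _, h2, Or.inl (Finset.ssubset_insert hb),
          Or.inl (Finset.card_insert_of_notMem hb), rfl⟩, ?_⟩
        rw [val_up G γ S T h, val_up G γ S' _ (Finset.ssubset_insert hb)]
        have := hGmono _ _ hSS
        have := Finset.sum_le_sum_of_subset_of_nonneg hTT (fun i _ _ => (hγ i).le)
        linarith
      · exact ⟨_, ⟨S, hS, _, hT, Or.inr ⟨b, hb, rfl⟩,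
          Or.inr (Finset.card_erase_add_one hb).symm, rfl⟩, le_rfl⟩
    · rintro x ⟨S, hS, T, hT, hadm, -, rfl⟩
      exact ⟨_, ⟨S, hS, T, hT, hadm, rfl⟩, le_rfl⟩
end

section
/- Let A be any set of states, and let Ŝ ∈ A and Ẑ ∉ A be states with Ŝ ⊊ Ẑ and |Ẑ| ≥ |Ŝ| + 2. Then there exist a state S′ ∈ A and an index b ∉ S′ such that Ŝ ⊆ S′, S′ ∪ {b} ⊆ Ẑ, S′ ∪ {b} ∉ A, and φ(Ŝ) − Σ_{b′ ∈ Ẑ∖Ŝ} γ_{b′} ≤ φ(S′) − γ_b. -/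
/-- Key inequality of Appendix A: any upward crossing transition from Ŝ ∈ A (`Shat`) to
an ancestor Ẑ ∉ A (`Zhat`) whose weight exceeds |Ŝ| by at least 2 is dominated by a
parent–child crossing transition (S', S' ∪ {b}) between A and its complement. -/
theorem stmt2 {B : ℕ} (G : Finset (Fin B) → ℝ) (γ : Fin B → ℝ)
    (hG0 : G ∅ = 0)
    (hGmono : ∀ S T : Finset (Fin B), S ⊆ T → G S ≤ G T)
    (hγ : ∀ b, 0 < γ b)
    (A : Set (Finset (Fin B))) (Shat Zhat : Finset (Fin B))
    (hS : Shat ∈ A) (hZ : Zhat ∉ A) (hss : Shat ⊂ Zhat)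
    (hcard : Shat.card + 2 ≤ Zhat.card) :
    ∃ S' ∈ A, ∃ b ∉ S', Shat ⊆ S' ∧ insert b S' ⊆ Zhat ∧ insert b S' ∉ A ∧
      phi G γ Shat - ∑ b' ∈ Zhat \ Shat, γ b' ≤ phi G γ S' - γ b := by
  classical
  obtain ⟨S', hS', hmax⟩ := Finset.exists_max_image
    (Zhat.powerset.filter (fun S => Shat ⊆ S ∧ S ∈ A)) Finset.card
    ⟨Shat, by simp [hS, hss.subset]⟩
  simp only [Finset.mem_filter, Finset.mem_powerset] at hS' hmax
  obtain ⟨hSZ, hSS, hSA⟩ := hS'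
  have hne : S' ≠ Zhat := fun h => hZ (h ▸ hSA)
  obtain ⟨b, hbZ, hbS⟩ := Finset.exists_of_ssubset (hSZ.ssubset_of_ne hne)
  have hins : insert b S' ⊆ Zhat := Finset.insert_subset hbZ hSZ
  refine ⟨S', hSA, b, hbS, hSS, hins, ?_, ?_⟩
  · intro hA
    have h := hmax (insert b S') ⟨hins, hSS.trans (Finset.subset_insert _ _), hA⟩
    rw [Finset.card_insert_of_notMem hbS] at h
    omega
  · have h1 := Finset.sum_sdiff (f := γ) hss.subset
    have h2 : ∑ x ∈ insert b S', γ x ≤ ∑ x ∈ Zhat, γ x :=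
      Finset.sum_le_sum_of_subset_of_nonneg hins (fun i _ _ => (hγ i).le)
    rw [Finset.sum_insert hbS] at h2
    have h3 := hGmono _ _ hSS
    unfold phi
    linarith
end

section
/- Let λ > 0 and T > 0, and let (Z_k)_{k≥1} be an i.i.d. sequence of exponential random variables with rate λ on a probability space. Let N := inf{ k ≥ 1 : Z_k ≥ T }. Then N is almost surely finite and E[ T + Σ_{k=1}^{N−1} Z_k ] = (e^{λT} − 1)/λ. -/
open MeasureTheory ProbabilityTheory

lemma aux_tail {Ω : Type*} [MeasurableSpace Ω] (μ : Measure Ω)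
    (lam T : ℝ) (hT : 0 < T) (Y : Ω → ℝ)
    (hexp : ∀ t : ℝ, 0 ≤ t → μ {ω | t < Y ω} = ENNReal.ofReal (Real.exp (-(lam * t)))) :
    μ {ω | T ≤ Y ω} = ENNReal.ofReal (Real.exp (-(lam * T))) := by
  apply le_antisymm
  · have hc : Filter.Tendsto (fun s : ℝ => ENNReal.ofReal (Real.exp (-(lam * s))))
        (nhdsWithin T (Set.Iio T)) (nhds (ENNReal.ofReal (Real.exp (-(lam * T))))) := by
      have : Continuous (fun s : ℝ => ENNReal.ofReal (Real.exp (-(lam * s)))) :=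
        ENNReal.continuous_ofReal.comp (by fun_prop)
      exact (this.tendsto T).mono_left nhdsWithin_le_nhds
    refine ge_of_tendsto hc ?_
    filter_upwards [Ioo_mem_nhdsLT hT] with s hs
    rw [← hexp s hs.1.le]
    exact measure_mono fun ω (hω : T ≤ Y ω) => lt_of_lt_of_le hs.2 hω
  · rw [← hexp T hT.le]
    exact measure_mono fun ω (hω : T < Y ω) => hω.le

lemma aux_min {Ω : Type*} [MeasurableSpace Ω] (μ : Measure Ω) [IsProbabilityMeasure μ]
    (lam T : ℝ) (hlam : 0 < lam) (hT : 0 < T) (Y : Ω → ℝ) (hY : Measurable Y)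
    (hpos : ∀ᵐ ω ∂μ, 0 < Y ω)
    (hexp : ∀ t : ℝ, 0 ≤ t → μ {ω | t < Y ω} = ENNReal.ofReal (Real.exp (-(lam * t)))) :
    ∫⁻ ω, ENNReal.ofReal (min (Y ω) T) ∂μ =
      ENNReal.ofReal ((1 - Real.exp (-(lam * T))) / lam) := by
  rw [lintegral_eq_lintegral_meas_lt μ]
  · have h1 : ∫⁻ t in Set.Ioi (0:ℝ), μ {a | t < min (Y a) T} =
        ∫⁻ t in Set.Ioi (0:ℝ), (Set.Iio T).indicator
          (fun t => ENNReal.ofReal (Real.exp (-(lam * t)))) t := by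
      refine setLIntegral_congr_fun measurableSet_Ioi fun t ht => ?_
      by_cases h : t < T
      · simp only [lt_min_iff, h, and_true, Set.indicator, Set.mem_Iio, if_true]
        exact hexp t (le_of_lt ht)
      · simp [h]
    rw [h1, setLIntegral_indicator measurableSet_Iio, Set.inter_comm, Set.Ioi_inter_Iio,
      ← ofReal_integral_eq_lintegral_ofReal, ← integral_Ioc_eq_integral_Ioo,
      ← intervalIntegral.integral_of_le hT.le]
    · congr 1
      have hd : ∀ x ∈ Set.uIcc 0 T, HasDerivAt (fun x : ℝ => -Real.exp (-(lam * x)) / lam)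
          (Real.exp (-(lam * x))) x := by
        intro x _
        have h := (((hasDerivAt_id x).const_mul lam).neg.exp.neg).div_const lam
        convert! h using 1
        simp
        field_simp
      rw [intervalIntegral.integral_eq_sub_of_hasDerivAt hd]
      · simp; ring
      · exact Continuous.intervalIntegrable (by fun_prop) _ _
    · exact ((Continuous.integrableOn_Icc (by fun_prop)).mono_set Set.Ioo_subset_Icc_self)
    · exact Filter.Eventually.of_forall fun x => (Real.exp_pos _).le
  · filter_upwards [hpos] with ω h
    exact le_min h.le hT.le
  · exact (hY.min measurable_const).aemeasurable

/-- Expected sojourn time computation of Section IV-A (equation (9)) via Wald's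
identity. Here `Z k` stands for the inter-update time Z_{k+1} (0-based indexing), so
that `N ω = sInf {k | T ≤ Z k ω}` is the (1-based) stopping index minus one, the sum
`∑ k ∈ Finset.range (N ω), Z k ω` is Σ_{k=1}^{N-1} Z_k, and the exponential
distribution of rate λ is characterized by its survival function. -/
theorem stmt5 {Ω : Type*} [MeasurableSpace Ω] (μ : Measure Ω) [IsProbabilityMeasure μ]
    (lam T : ℝ) (hlam : 0 < lam) (hT : 0 < T)
    (Z : ℕ → Ω → ℝ) (hmeas : ∀ k, Measurable (Z k))
    (hindep : iIndepFun Z μ)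
    (hexp : ∀ k, ∀ t : ℝ, 0 ≤ t →
      μ {ω | t < Z k ω} = ENNReal.ofReal (Real.exp (-(lam * t))))
    (N : Ω → ℕ) (hN : ∀ ω, N ω = sInf {k | T ≤ Z k ω}) :
    (∀ᵐ ω ∂μ, ∃ k, T ≤ Z k ω) ∧
    ∫ ω, (T + ∑ k ∈ Finset.range (N ω), Z k ω) ∂μ =
      (Real.exp (lam * T) - 1) / lam := by
  classical
  set q := Real.exp (-(lam * T)) with hq
  have hq0 : 0 < q := Real.exp_pos _
  have hq1 : q < 1 := by
    rw [hq, Real.exp_lt_one_iff]; nlinarith [mul_pos hlam hT]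
  have htail : ∀ k, μ {ω | T ≤ Z k ω} = ENNReal.ofReal q := fun k =>
    aux_tail μ lam T hT (Z k) (hexp k)
  have hlt : ∀ k, μ {ω | Z k ω < T} = 1 - ENNReal.ofReal q := by
    intro k
    rw [← htail k, ← prob_compl_eq_one_sub (measurableSet_le measurable_const (hmeas k))]
    congr 1; ext ω; simp
  have hpos : ∀ k, ∀ᵐ ω ∂μ, 0 < Z k ω := by
    intro k
    have h : μ {ω | 0 < Z k ω} = 1 := by simpa using hexp k 0 le_rfl
    exact (prob_compl_eq_zero_iff (measurableSet_lt measurable_const (hmeas k))).2 h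
  set p : ENNReal := 1 - ENNReal.ofReal q with hp
  have hp1 : p < 1 := ENNReal.sub_lt_self ENNReal.one_ne_top one_ne_zero (by simpa using hq0)
  have h1p : 1 - p = ENNReal.ofReal q :=
    ENNReal.sub_sub_cancel ENNReal.one_ne_top (by simpa using hq1.le)
  have hfin : ∀ᵐ ω ∂μ, ∃ k, T ≤ Z k ω := by
    have hle : ∀ n : ℕ, μ {ω | ¬ ∃ k, T ≤ Z k ω} ≤ p ^ n := by
      intro n
      have h := hindep.measure_inter_preimage_eq_mul (Finset.range n)
        (sets := fun _ => Set.Iio T) (fun _ _ => measurableSet_Iio)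
      have h2 : ∏ i ∈ Finset.range n, μ (Z i ⁻¹' Set.Iio T) = p ^ n := by
        exact (Finset.prod_congr rfl (fun i _ => hlt i)).trans (by simp)
      rw [← h2, ← h]
      refine measure_mono fun ω hω => ?_
      simp only [Set.mem_setOf_eq, not_exists, not_le] at hω
      simp [hω]
    exact le_antisymm (ge_of_tendsto' (ENNReal.tendsto_pow_atTop_nhds_zero_of_lt_one hp1) hle)
      zero_le
  refine ⟨hfin, ?_⟩
  let u : ℝ → ENNReal := (Set.Iio T).indicator 1
  let v : ℝ → ENNReal := fun x => ENNReal.ofReal (min x T)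
  have hu : Measurable u := measurable_one.indicator measurableSet_Iio
  have hv : Measurable v := (measurable_id.min measurable_const).ennreal_ofReal
  let G : ℕ → Ω → ENNReal := fun k ω => (∏ j ∈ Finset.range k, u (Z j ω)) * v (Z k ω)
  let F : Ω → ENNReal := fun ω => ∑' k, G k ω
  have hGm : ∀ k, Measurable (G k) := fun k =>
    (Finset.measurable_fun_prod _ fun j _ => hu.comp (hmeas j)).mul (hv.comp (hmeas k))
  have hG : ∀ k, ∫⁻ ω, G k ω ∂μ = p ^ k * ENNReal.ofReal ((1 - q) / lam) := by
    intro k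
    let g : ℕ → ℝ → ENNReal := fun j => if j = k then v else u
    have hg : ∀ j, Measurable (g j) := by
      intro j; by_cases h : j = k <;> simp only [g, h, if_true, if_false, hu, hv]
    have h := lintegral_prod_eq_prod_lintegral_of_indepFun (Finset.range (k+1)) _
      (hindep.comp g hg) (fun i => (hg i).comp (hmeas i))
    have hgk : g k = v := by simp [g]
    have hgj : ∀ j ∈ Finset.range k, g j = u := by
      intro j hj
      simp [g, (Finset.mem_range.1 hj).ne]
    simp only [Finset.prod_range_succ, Function.comp_apply, hgk] at h
    have e1 : ∀ ω, ∏ j ∈ Finset.range k, g j (Z j ω) = ∏ j ∈ Finset.range k, u (Z j ω) :=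
      fun ω => Finset.prod_congr rfl fun j hj => by rw [hgj j hj]
    have e2 : ∏ j ∈ Finset.range k, ∫⁻ ω, g j (Z j ω) ∂μ = p ^ k := by
      have : ∀ j ∈ Finset.range k, ∫⁻ ω, g j (Z j ω) ∂μ = p := by
        intro j hj
        rw [hgj j hj, ← hlt j, ← lintegral_indicator_one (measurableSet_lt (hmeas j) measurable_const)]
        rfl
      rw [Finset.prod_congr rfl this]; simp
    simp only [e1] at h
    rw [e2, aux_min μ lam T hlam hT (Z k) (hmeas k) (hpos k) (hexp k)] at h
    exact h
  have hF : ∫⁻ ω, F ω ∂μ = ENNReal.ofReal ((Real.exp (lam * T) - 1) / lam) := by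
    rw [lintegral_tsum fun k => (hGm k).aemeasurable]
    simp only [hG]
    rw [ENNReal.tsum_mul_right, ENNReal.tsum_geometric, h1p, ← ENNReal.ofReal_inv_of_pos hq0,
      ← ENNReal.ofReal_mul (by positivity)]
    congr 1
    have : Real.exp (lam * T) = q⁻¹ := by rw [hq, Real.exp_neg, inv_inv]
    rw [this]; field_simp
  have hFm : Measurable F := Measurable.ennreal_tsum hGm
  have hval : 0 ≤ (Real.exp (lam * T) - 1) / lam := by
    have := Real.one_le_exp (mul_pos hlam hT).le
    exact div_nonneg (by linarith) hlam.le
  have hae : ∀ᵐ ω ∂μ, T + ∑ k ∈ Finset.range (N ω), Z k ω = (F ω).toReal := by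
    filter_upwards [hfin, ae_all_iff.2 hpos] with ω hω hp'
    have hNT : T ≤ Z (N ω) ω := by rw [hN]; exact Nat.sInf_mem hω
    have hNlt : ∀ j < N ω, Z j ω < T := by
      intro j hj
      rw [hN] at hj
      exact not_le.1 (Nat.notMem_of_lt_sInf hj)
    have hFω : F ω = ENNReal.ofReal (T + ∑ k ∈ Finset.range (N ω), Z k ω) := by
      have h0 : F ω = ∑ k ∈ Finset.range (N ω + 1), G k ω := by
        refine tsum_eq_sum fun k hk => ?_
        have hk' : N ω < k := by simpa using hk
        have : ∏ j ∈ Finset.range k, u (Z j ω) = 0 :=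
          Finset.prod_eq_zero (Finset.mem_range.2 hk') (by simp [u, hNT])
        simp [G, this]
      have h1 : ∀ k ≤ N ω, G k ω = v (Z k ω) := by
        intro k hk
        have : ∏ j ∈ Finset.range k, u (Z j ω) = 1 :=
          Finset.prod_eq_one fun j hj => by
            simp [u, hNlt j (lt_of_lt_of_le (Finset.mem_range.1 hj) hk)]
        simp [G, this]
      rw [h0, Finset.sum_range_succ, h1 _ le_rfl, add_comm,
        ENNReal.ofReal_add hT.le (Finset.sum_nonneg fun k _ => (hp' k).le),
        ENNReal.ofReal_sum_of_nonneg fun k _ => (hp' k).le]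
      congr 1
      · simp only [v, min_eq_right hNT]
      · refine Finset.sum_congr rfl fun k hk => ?_
        have hk := Finset.mem_range.1 hk
        rw [h1 k hk.le]
        simp only [v, min_eq_left (hNlt k hk).le]
    rw [hFω, ENNReal.toReal_ofReal]
    exact add_nonneg hT.le (Finset.sum_nonneg fun k _ => (hp' k).le)
  rw [integral_congr_ae hae, integral_toReal hFm.aemeasurable, hF, ENNReal.toReal_ofReal hval]
  exact ae_lt_top hFm (by rw [hF]; exact ENNReal.ofReal_ne_top)
end

section
/- Let β > 0 and Δ > 0, and let T : (0,1) → ℝ be a function such that lim_{q→0⁺} βT(q)/log(1/q) = 1. Define ρ(q) := βΔ / (e^{βΔ·T(q)} − 1). Then lim_{q→0⁺} log ρ(q) / log q = Δ. -/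
open Filter Topology

/-- Logarithmic asymptotics of the downward transition rate (Lemma 1 of the paper):
if the characteristic time T(q) (defined for q ∈ (0,1)) satisfies
βT(q)/log(1/q) → 1 as q → 0⁺, then for ρ(q) = βΔ/(e^{βΔT(q)} − 1) we have
log ρ(q)/log q → Δ. -/
theorem stmt7 (β Δ : ℝ) (hβ : 0 < β) (hΔ : 0 < Δ) (T : ℝ → ℝ)
    (hT : Tendsto (fun q => β * T q / Real.log (1 / q))
      (𝓝[Set.Ioo (0 : ℝ) 1] 0) (𝓝 1)) :
    Tendsto (fun q => Real.log (β * Δ / (Real.exp (β * Δ * T q) - 1)) / Real.log q)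
      (𝓝[Set.Ioo (0 : ℝ) 1] 0) (𝓝 Δ) := by
  have hl : Tendsto Real.log (𝓝[Set.Ioo (0 : ℝ) 1] 0) atBot :=
    Real.tendsto_log_nhdsGT_zero.mono_left (nhdsWithin_mono _ (fun x hx => hx.1))
  have hL : Tendsto (fun q : ℝ => Real.log (1 / q)) (𝓝[Set.Ioo (0 : ℝ) 1] 0) atTop := by
    have h := tendsto_neg_atBot_atTop.comp hl
    refine h.congr (fun q => ?_)
    simp
  have hmem : ∀ᶠ q in 𝓝[Set.Ioo (0 : ℝ) 1] (0 : ℝ), 0 < Real.log (1 / q) :=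
    hL.eventually_gt_atTop 0
  have hr : Tendsto (fun q => Δ * (β * T q / Real.log (1 / q)))
      (𝓝[Set.Ioo (0 : ℝ) 1] 0) (𝓝 Δ) := by
    simpa using hT.const_mul Δ
  have hx : Tendsto (fun q => β * Δ * T q) (𝓝[Set.Ioo (0 : ℝ) 1] 0) atTop := by
    refine (hr.pos_mul_atTop hΔ hL).congr' ?_
    filter_upwards [hmem] with q hq
    have := hq.ne'
    generalize Real.log (1 / q) = L at *
    field_simp
  have he : Tendsto (fun q => Real.exp (-(β * Δ * T q))) (𝓝[Set.Ioo (0 : ℝ) 1] 0) (𝓝 0) :=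
    Real.tendsto_exp_neg_atTop_nhds_zero.comp hx
  have hlog : Tendsto (fun q => Real.log (1 - Real.exp (-(β * Δ * T q))))
      (𝓝[Set.Ioo (0 : ℝ) 1] 0) (𝓝 0) := by
    have h1 := (he.const_sub 1).log (by norm_num)
    simpa using h1
  have hq0 := (hlog.sub_const (Real.log (β * Δ))).div_atTop hL
  have hs := hr.add hq0
  rw [add_zero] at hs
  refine hs.congr' ?_
  filter_upwards [hmem, hx.eventually_gt_atTop 0] with q hq hxq
  have hlt : Real.exp (-(β * Δ * T q)) < 1 := Real.exp_lt_one_iff.mpr (by linarith)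
  have hfac : Real.exp (β * Δ * T q) - 1
      = Real.exp (β * Δ * T q) * (1 - Real.exp (-(β * Δ * T q))) := by
    rw [mul_sub, ← Real.exp_add]; simp
  have hne : 1 - Real.exp (-(β * Δ * T q)) ≠ 0 := (sub_pos.mpr hlt).ne'
  rw [hfac, Real.log_div (by positivity) (mul_ne_zero (Real.exp_ne_zero _) hne),
    Real.log_mul (Real.exp_ne_zero _) hne, Real.log_exp]
  have hlq : Real.log q = - Real.log (1 / q) := by simp
  rw [hlq]
  have := hq.ne'
  generalize Real.log (1 / q) = L at *
  generalize Real.log (1 - Real.exp (-(β * Δ * T q))) = A at *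
  generalize Real.log (β * Δ) = B at *
  field_simp
  ring
end

section
/- For every state X, the set of admissible in-trees rooted at X is nonempty, and the minimum in-tree resistance ρ(X) satisfies: a state X minimizes ρ over all states if and only if X maximizes φ over all states. That is, { X : ρ(X) ≤ ρ(Y) for all states Y } = { X : φ(X) ≥ φ(Y) for all states Y }. -/
/-- An admissible in-tree rooted at X: every state S ≠ X is mapped to a state t(S) with
(S, t(S)) an admissible transition, and some finite iterate of t sends S to X. -/
def IsInTree {B : ℕ} (X : Finset (Fin B))
    (t : Finset (Fin B) → Finset (Fin B)) : Prop :=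
  ∀ S : Finset (Fin B), S ≠ X → Adm S (t S) ∧ ∃ n : ℕ, t^[n] S = X

/-- The resistance of an in-tree rooted at X: Σ_{S ≠ X} r(S, t(S)). -/
noncomputable def treeRes {B : ℕ} (G : Finset (Fin B) → ℝ) (γ : Fin B → ℝ)
    (X : Finset (Fin B)) (t : Finset (Fin B) → Finset (Fin B)) : ℝ :=
  ∑ S ∈ Finset.univ.filter (· ≠ X), res G γ S (t S)

/-- ρ(X): the minimum resistance over all admissible in-trees rooted at X. -/
noncomputable def minRes {B : ℕ} (G : Finset (Fin B) → ℝ) (γ : Fin B → ℝ)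
    (X : Finset (Fin B)) : ℝ :=
  sInf {w : ℝ | ∃ t, IsInTree X t ∧ w = treeRes G γ X t}

def RL {α : Type*} (E : Finset (α × α)) : ℕ → α → α → Prop
  | 0, a, b => a = b
  | n + 1, a, b => ∃ c, RL E n a c ∧ (c, b) ∈ E

theorem RL_head {α : Type*} (E : Finset (α × α)) (n : ℕ) :
    ∀ a b, RL E (n + 1) a b → ∃ c, (a, c) ∈ E ∧ RL E n c b := by
  induction n with
  | zero =>
    rintro a b ⟨c, hc, h⟩
    have hc' : a = c := hc
    subst hc'
    exact ⟨b, h, rfl⟩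
  | succ n ih =>
    rintro a b ⟨c, hc, h⟩
    obtain ⟨d, hd, h2⟩ := ih a c hc
    exact ⟨d, hd, c, h2, h⟩

def Rch {α : Type*} (E : Finset (α × α)) (a b : α) : Prop :=
  Relation.ReflTransGen (fun x y => (x, y) ∈ E) a b

theorem Rch_RL {α : Type*} {E : Finset (α × α)} {a b : α} (h : Rch E a b) :
    ∃ n, RL E n a b := by
  unfold Rch at h
  induction h with
  | refl => exact ⟨0, rfl⟩
  | tail _ h ih =>
    obtain ⟨n, hn⟩ := ih
    exact ⟨n + 1, _, hn, h⟩

theorem Rch_mono {α : Type*} {E F : Finset (α × α)} (hEF : E ⊆ F) {a b : α} (h : Rch E a b) :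
    Rch F a b := Relation.ReflTransGen.mono (fun _ _ h => hEF h) _ _ h

/-- extraction of a tree function from an edge set -/
theorem extract {α : Type*} (E : Finset (α × α)) (X : α) (h : ∀ S, Rch E S X) :
    ∃ t : α → α, (∀ S, S ≠ X → (S, t S) ∈ E) ∧ ∀ S, ∃ n : ℕ, t^[n] S = X := by
  classical
  have h' : ∀ S, ∃ n, RL E n S X := fun S => Rch_RL (h S)
  have key : ∀ S, ∃ T, S ≠ X → (S, T) ∈ E ∧ Nat.find (h' T) < Nat.find (h' S) := by
    intro S
    by_cases hS : S = X
    · exact ⟨S, fun h => absurd hS h⟩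
    · have hs := Nat.find_spec (h' S)
      rcases hn : Nat.find (h' S) with _ | n
      · rw [hn] at hs
        exact absurd hs hS
      · rw [hn] at hs
        obtain ⟨c, hc, h2⟩ := RL_head E n S X hs
        exact ⟨c, fun _ => ⟨hc, Nat.lt_succ_of_le (Nat.find_min' _ h2)⟩⟩
  choose t ht using key
  refine ⟨t, fun S hS => (ht S hS).1, ?_⟩
  have : ∀ n S, Nat.find (h' S) ≤ n → ∃ m : ℕ, t^[m] S = X := by
    intro n
    induction n with
    | zero =>
      intro S hS
      have hs := Nat.find_spec (h' S)
      rw [Nat.le_zero.mp hS] at hs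
      exact ⟨0, hs⟩
    | succ n ih =>
      intro S hS
      by_cases hX : S = X
      · exact ⟨0, hX⟩
      · obtain ⟨m, hm⟩ := ih (t S) (by have := (ht S hX).2; omega)
        exact ⟨m + 1, hm⟩
  exact fun S => this _ S le_rfl

theorem reroot {α : Type*} [DecidableEq α] (r : α → α → ℝ) (φ : α → ℝ) (P : α → α → Prop)
    (hsymm : ∀ a b, P a b → P b a) (hP : ∀ a b, P a b → 0 ≤ r a b)
    (hrev : ∀ a b, P a b → r a b - r b a = φ a - φ b) (Y : α) (n : ℕ) :
    ∀ (X : α) (E : Finset (α × α)), (∀ p ∈ E, P p.1 p.2) → (∀ S, Rch E S X) →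
      (∃ m, m ≤ n ∧ RL E m Y X) →
      ∃ E' : Finset (α × α), (∀ p ∈ E', P p.1 p.2) ∧ (∀ S, Rch E' S Y) ∧
        ∑ p ∈ E', r p.1 p.2 ≤ ∑ p ∈ E, r p.1 p.2 + φ X - φ Y := by
  induction n with
  | zero =>
    rintro X E hE hX ⟨m, hm, h⟩
    rw [Nat.le_zero.mp hm] at h
    have h : Y = X := h
    subst h
    exact ⟨E, hE, hX, by linarith⟩
  | succ n ih =>
    rintro X E hE hX ⟨m, hm, h⟩
    rcases m with _ | m
    · exact ih X E hE hX ⟨0, by omega, h⟩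
    obtain ⟨Z, hZ, hZX⟩ := h
    set E' : Finset (α × α) := insert (X, Z) (E.erase (Z, X)) with hE'
    have hmem : ∀ a b, (a, b) ∈ E → (a, b) ≠ (Z, X) → (a, b) ∈ E' := fun a b h1 h2 =>
      Finset.mem_insert_of_mem (Finset.mem_erase.2 ⟨h2, h1⟩)
    have h1 : ∀ p ∈ E', P p.1 p.2 := by
      intro p hp
      rcases Finset.mem_insert.1 hp with rfl | hp
      · exact hsymm _ _ (hE _ hZX)
      · exact hE _ (Finset.mem_of_mem_erase hp)
    have h2 : ∀ S, Rch E' S Z := by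
      intro S
      refine Relation.ReflTransGen.head_induction_on (hX S) ?_ ?_
      · exact Relation.ReflTransGen.single (Finset.mem_insert_self _ _)
      · intro a c hac _ ihc
        by_cases hh : (a, c) = (Z, X)
        · have : a = Z := congrArg Prod.fst hh
          subst this
          exact Relation.ReflTransGen.refl
        · exact Relation.ReflTransGen.head (hmem _ _ hac hh) ihc
    have h3 : ∀ k V, RL E k Y V → (∃ m, m ≤ k ∧ RL E' m Y V) ∨ (∃ m, m ≤ k ∧ RL E' m Y Z) := by
      intro k
      induction k with
      | zero => intro V hV; exact Or.inl ⟨0, le_rfl, hV⟩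
      | succ k ihk =>
        rintro W ⟨V, hV, hVW⟩
        rcases ihk V hV with ⟨m, hm, h⟩ | ⟨m, hm, h⟩
        · by_cases hh : (V, W) = (Z, X)
          · have : V = Z := congrArg Prod.fst hh
            subst this
            exact Or.inr ⟨m, by omega, h⟩
          · exact Or.inl ⟨m + 1, by omega, V, h, hmem _ _ hVW hh⟩
        · exact Or.inr ⟨m, by omega, h⟩
    have h4 : ∃ k, k ≤ n ∧ RL E' k Y Z := by
      rcases h3 m Z hZ with ⟨k, hk, h⟩ | ⟨k, hk, h⟩
      · exact ⟨k, by omega, h⟩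
      · exact ⟨k, by omega, h⟩
    obtain ⟨F, hF1, hF2, hF3⟩ := ih Z E' h1 h2 h4
    refine ⟨F, hF1, hF2, ?_⟩
    have h5 : ∑ p ∈ E', r p.1 p.2 ≤ r X Z + ∑ p ∈ E.erase (Z, X), r p.1 p.2 := by
      by_cases hh : (X, Z) ∈ E.erase (Z, X)
      · rw [hE', Finset.insert_eq_of_mem hh]
        have := hP _ _ (hsymm _ _ (hE _ hZX))
        simp only at this
        linarith
      · rw [hE', Finset.sum_insert hh]
    have h6 := Finset.add_sum_erase E (fun p => r p.1 p.2) hZX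
    have h7 := hrev _ _ (hE _ hZX)
    simp only at h6 h7
    linarith

def Sg {B : ℕ} (S T : Finset (Fin B)) : Prop :=
  (∃ b, b ∉ S ∧ T = insert b S) ∨ (∃ b, b ∉ T ∧ S = insert b T)

theorem Sg_Adm {B : ℕ} {S T : Finset (Fin B)} (h : Sg S T) : Adm S T := by
  rcases h with ⟨b, hb, rfl⟩ | ⟨b, hb, rfl⟩
  · exact Or.inl (Finset.ssubset_insert hb)
  · exact Or.inr ⟨b, Finset.mem_insert_self _ _, (Finset.erase_insert hb).symm⟩

theorem res_up {B : ℕ} (G : Finset (Fin B) → ℝ) (γ : Fin B → ℝ) (S : Finset (Fin B))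
    (b : Fin B) (hb : b ∉ S) : res G γ S (insert b S) = γ b := by
  unfold res
  rw [if_pos (Finset.ssubset_insert hb)]
  have : insert b S \ S = {b} := by
    ext x; simp only [Finset.mem_sdiff, Finset.mem_insert, Finset.mem_singleton]
    constructor
    · tauto
    · rintro rfl; tauto
  rw [this, Finset.sum_singleton]

theorem res_down {B : ℕ} (G : Finset (Fin B) → ℝ) (γ : Fin B → ℝ) (S : Finset (Fin B))
    (b : Fin B) : res G γ (insert b S) S = G (insert b S) - G S := by
  unfold res
  rw [if_neg (fun h => h.2 (Finset.subset_insert _ _))]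

theorem chain {B : ℕ} (G : Finset (Fin B) → ℝ) (γ : Fin B → ℝ) (hγ : ∀ b, 0 < γ b)
    (S D : Finset (Fin B)) : Disjoint S D →
    ∃ F : Finset (Finset (Fin B) × Finset (Fin B)), (∀ p ∈ F, Sg p.1 p.2) ∧ Rch F S (S ∪ D) ∧
      ∑ p ∈ F, res G γ p.1 p.2 ≤ ∑ b ∈ D, γ b := by
  classical
  induction D using Finset.induction_on with
  | empty => 
    intro _
    refine ⟨∅, by simp, ?_, by simp⟩
    rw [Finset.union_empty]
    exact Relation.ReflTransGen.refl
  | insert b D hb ih =>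
    intro hd
    rw [Finset.disjoint_insert_right] at hd
    obtain ⟨F, h1, h2, h3⟩ := ih hd.2
    have hb' : b ∉ S ∪ D := by simp [hb, hd.1]
    refine ⟨insert (S ∪ D, insert b (S ∪ D)) F, ?_, ?_, ?_⟩
    · intro p hp
      rcases Finset.mem_insert.1 hp with rfl | hp
      · exact Or.inl ⟨b, hb', rfl⟩
      · exact h1 p hp
    · rw [Finset.union_insert]
      exact Relation.ReflTransGen.tail (Rch_mono (Finset.subset_insert _ _) h2)
        (Finset.mem_insert_self _ _)
    · rw [Finset.sum_insert hb]
      by_cases hh : (S ∪ D, insert b (S ∪ D)) ∈ F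
      · rw [Finset.insert_eq_of_mem hh]
        linarith [hγ b]
      · rw [Finset.sum_insert hh]
        simp only
        rw [res_up G γ _ _ hb']
        linarith

theorem chainAdm {B : ℕ} (G : Finset (Fin B) → ℝ) (γ : Fin B → ℝ) (hγ : ∀ b, 0 < γ b)
    (S T : Finset (Fin B)) (h : Adm S T) :
    ∃ F : Finset (Finset (Fin B) × Finset (Fin B)), (∀ p ∈ F, Sg p.1 p.2) ∧ Rch F S T ∧
      ∑ p ∈ F, res G γ p.1 p.2 ≤ res G γ S T := by
  rcases h with h | ⟨b, hb, rfl⟩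
  · obtain ⟨F, h1, h2, h3⟩ := chain G γ hγ S (T \ S) Finset.disjoint_sdiff
    rw [Finset.union_sdiff_of_subset h.1] at h2
    refine ⟨F, h1, h2, ?_⟩
    rw [res, if_pos h]
    exact h3
  · refine ⟨{(S, S.erase b)}, ?_, ?_, by simp⟩
    · intro p hp
      rw [Finset.mem_singleton] at hp
      subst hp
      exact Or.inr ⟨b, Finset.notMem_erase _ _, (Finset.insert_erase hb).symm⟩
    · exact Relation.ReflTransGen.single (Finset.mem_singleton_self _)

theorem sum_biUnion_le' {ι α : Type*} [DecidableEq α] [DecidableEq ι] (s : Finset ι)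
    (F : ι → Finset α) (f : α → ℝ)
    (hf : ∀ i ∈ s, ∀ a ∈ F i, 0 ≤ f a) : ∑ a ∈ s.biUnion F, f a ≤ ∑ i ∈ s, ∑ a ∈ F i, f a := by
  induction s using Finset.induction_on with
  | empty => simp
  | insert i s hi ih =>
    rw [Finset.biUnion_insert, Finset.sum_insert hi]
    have h1 := Finset.sum_union_inter (s₁ := F i) (s₂ := s.biUnion F) (f := f)
    have h2 : 0 ≤ ∑ a ∈ F i ∩ s.biUnion F, f a := Finset.sum_nonneg fun a ha =>
      hf i (Finset.mem_insert_self _ _) a (Finset.mem_inter.1 ha).1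
    have h3 := ih fun j hj => hf j (Finset.mem_insert_of_mem hj)
    linarith

theorem exists_tree {B : ℕ} (X : Finset (Fin B)) : ∃ t, IsInTree X t := by
  classical
  have key : ∀ S : Finset (Fin B), ∃ T, S ≠ X → Adm S T ∧ (T = X ∨ (T \ X).card < (S \ X).card) := by
    intro S
    by_cases hS : S = X
    · exact ⟨S, fun h => absurd hS h⟩
    by_cases hX : S ⊆ X
    · exact ⟨X, fun _ => ⟨Or.inl (hX.ssubset_of_ne hS), Or.inl rfl⟩⟩
    · obtain ⟨b, hb, hbX⟩ := Finset.not_subset.1 hX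
      refine ⟨S.erase b, fun _ => ⟨Or.inr ⟨b, hb, rfl⟩, Or.inr (Finset.card_lt_card ?_)⟩⟩
      rw [Finset.ssubset_iff_of_subset (Finset.sdiff_subset_sdiff (Finset.erase_subset _ _) le_rfl)]
      exact ⟨b, by simp [hb, hbX], by simp⟩
  choose t ht using key
  have : ∀ n S, (S \ X).card < n → ∃ m : ℕ, t^[m] S = X := by
    intro n
    induction n with
    | zero => intro S h; omega
    | succ n ih =>
      intro S h
      by_cases hS : S = X
      · exact ⟨0, hS⟩
      rcases (ht S hS).2 with h2 | h2
      · exact ⟨1, h2⟩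
      · obtain ⟨m, hm⟩ := ih (t S) (by omega)
        exact ⟨m + 1, hm⟩
  exact ⟨t, fun S hS => ⟨(ht S hS).1, this _ S (Nat.lt_succ_self _)⟩⟩

theorem res_nonneg {B : ℕ} (G : Finset (Fin B) → ℝ) (γ : Fin B → ℝ)
    (hGmono : ∀ S T : Finset (Fin B), S ⊆ T → G S ≤ G T)
    (hγ : ∀ b, 0 < γ b) (S T : Finset (Fin B)) (h : Adm S T) : 0 ≤ res G γ S T := by
  unfold res
  split_ifs with h1
  · exact Finset.sum_nonneg fun b _ => (hγ b).le
  · rcases h with h | ⟨b, hb, rfl⟩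
    · exact absurd h h1
    · exact sub_nonneg.2 (hGmono _ _ (Finset.erase_subset _ _))

theorem res_rev {B : ℕ} (G : Finset (Fin B) → ℝ) (γ : Fin B → ℝ)
    (S T : Finset (Fin B)) (h : Sg S T) :
    res G γ S T - res G γ T S = phi G γ S - phi G γ T := by
  rcases h with ⟨b, hb, rfl⟩ | ⟨b, hb, rfl⟩ <;>
  · rw [res_up G γ _ _ hb, res_down, phi, phi, Finset.sum_insert hb]
    ring

theorem tree_move {B : ℕ} (G : Finset (Fin B) → ℝ) (γ : Fin B → ℝ)
    (hGmono : ∀ S T : Finset (Fin B), S ⊆ T → G S ≤ G T)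
    (hγ : ∀ b, 0 < γ b) (X Y : Finset (Fin B)) (t) (ht : IsInTree X t) :
    ∃ t', IsInTree Y t' ∧ treeRes G γ Y t' ≤ treeRes G γ X t + phi G γ X - phi G γ Y := by
  classical
  have hnn := res_nonneg G γ hGmono hγ
  have key : ∀ S, ∃ F : Finset (Finset (Fin B) × Finset (Fin B)), S ≠ X →
      (∀ p ∈ F, Sg p.1 p.2) ∧ Rch F S (t S) ∧
      ∑ p ∈ F, res G γ p.1 p.2 ≤ res G γ S (t S) := by
    intro S
    by_cases hS : S = X
    · exact ⟨∅, fun h => absurd hS h⟩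
    · obtain ⟨F, hF⟩ := chainAdm G γ hγ S (t S) (ht S hS).1
      exact ⟨F, fun _ => hF⟩
  choose F hF using key
  set E := (Finset.univ.filter (· ≠ X)).biUnion F with hE
  have hE1 : ∀ p ∈ E, Sg p.1 p.2 := by
    intro p hp
    obtain ⟨S, hS, hp⟩ := Finset.mem_biUnion.1 hp
    exact (hF S (Finset.mem_filter.1 hS).2).1 p hp
  have hE2 : ∀ n S, t^[n] S = X → Rch E S X := by
    intro n
    induction n with
    | zero => intro S h; have h : S = X := h
              subst h; exact Relation.ReflTransGen.refl
    | succ n ih =>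
      intro S h
      by_cases hS : S = X
      · subst hS; exact Relation.ReflTransGen.refl
      · have h1 : F S ⊆ E := Finset.subset_biUnion_of_mem F (by simp [hS])
        exact Relation.ReflTransGen.trans (Rch_mono h1 (hF S hS).2.1) (ih (t S) h)
  have hE3 : ∀ S, Rch E S X := by
    intro S
    by_cases hS : S = X
    · subst hS; exact Relation.ReflTransGen.refl
    · obtain ⟨n, hn⟩ := (ht S hS).2
      exact hE2 n S hn
  have hE4 : ∑ p ∈ E, res G γ p.1 p.2 ≤ treeRes G γ X t := by
    refine (sum_biUnion_le' _ _ _ ?_).trans (Finset.sum_le_sum ?_)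
    · intro S hS p hp
      exact hnn _ _ (Sg_Adm ((hF S (Finset.mem_filter.1 hS).2).1 p hp))
    · intro S hS
      exact (hF S (Finset.mem_filter.1 hS).2).2.2
  obtain ⟨n, hn⟩ := Rch_RL (hE3 Y)
  obtain ⟨E', h1, h2, h3⟩ := reroot (res G γ) (phi G γ) Sg (fun a b h => Or.symm h)
    (fun a b h => hnn _ _ (Sg_Adm h)) (res_rev G γ) Y n X E hE1 hE3 ⟨n, le_rfl, hn⟩
  obtain ⟨t', ht1, ht2⟩ := extract E' Y h2
  refine ⟨t', fun S hS => ⟨Sg_Adm (h1 _ (ht1 S hS)), ht2 S⟩, ?_⟩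
  have h5 : treeRes G γ Y t' ≤ ∑ p ∈ E', res G γ p.1 p.2 := by
    have hinj : Set.InjOn (fun S => (S, t' S))
        (Finset.univ.filter (· ≠ Y) : Finset (Finset (Fin B))) :=
      fun a _ b _ h => congrArg Prod.fst h
    have := Finset.sum_image (f := fun p : Finset (Fin B) × Finset (Fin B) => res G γ p.1 p.2) hinj
    unfold treeRes
    simp only at this
    rw [← this]
    refine Finset.sum_le_sum_of_subset_of_nonneg ?_ ?_
    · intro p hp
      obtain ⟨S, hS, rfl⟩ := Finset.mem_image.1 hp
      exact ht1 S (Finset.mem_filter.1 hS).2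
    · intro p hp _
      exact hnn _ _ (Sg_Adm (h1 p hp))
  linarith

theorem minRes_le {B : ℕ} (G : Finset (Fin B) → ℝ) (γ : Fin B → ℝ)
    (hGmono : ∀ S T : Finset (Fin B), S ⊆ T → G S ≤ G T)
    (hγ : ∀ b, 0 < γ b) (X Y : Finset (Fin B)) :
    minRes G γ Y + phi G γ Y ≤ minRes G γ X + phi G γ X := by
  have : minRes G γ Y + phi G γ Y - phi G γ X ≤ minRes G γ X := by
    obtain ⟨t0, ht0⟩ := exists_tree X
    refine le_csInf ⟨_, t0, ht0, rfl⟩ ?_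
    rintro w ⟨t, ht, rfl⟩
    obtain ⟨t', h1, h2⟩ := tree_move G γ hGmono hγ X Y t ht
    have : minRes G γ Y ≤ treeRes G γ Y t' := by
      refine csInf_le ⟨0, ?_⟩ ⟨t', h1, rfl⟩
      rintro w ⟨s, hs, rfl⟩
      exact Finset.sum_nonneg fun S hS =>
        res_nonneg G γ hGmono hγ _ _ (hs S (Finset.mem_filter.1 hS).2).1
    linarith
  linarith

/-- Corollary 1 (deterministic content): in-trees exist at every root, and the states
of minimal in-tree resistance ρ are exactly the global maximizers of φ. -/
theorem stmt10 {B : ℕ} (G : Finset (Fin B) → ℝ) (γ : Fin B → ℝ)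
    (hG0 : G ∅ = 0)
    (hGmono : ∀ S T : Finset (Fin B), S ⊆ T → G S ≤ G T)
    (hγ : ∀ b, 0 < γ b) :
    (∀ X : Finset (Fin B), ∃ t, IsInTree X t) ∧
    {X : Finset (Fin B) | ∀ Y, minRes G γ X ≤ minRes G γ Y} =
      {X : Finset (Fin B) | ∀ Y, phi G γ Y ≤ phi G γ X} := by
  refine ⟨exists_tree, ?_⟩
  have h := minRes_le G γ hGmono hγ
  ext X
  simp only [Set.mem_setOf_eq]
  constructor
  · intro hX Y
    linarith [hX Y, h X Y, h Y X]
  · intro hX Y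
    linarith [hX Y, h X Y, h Y X]
end
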